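/- Let Ω ⊂ ℝ^d be a compact set satisfying the interior cone condition, let μ be a nicely behaving distribution on Ω, and let X_1,…,X_n be i.i.d. random points with law μ. Let h_n denote the fill distance of {X_1,…,X_n} with respect to Ω. Then there exist constants κ > 0 and c > 0 such that for all sufficiently small ε > 0 and all n ≥ 1, P( h_n ≥ 2ε ) ≤ (κ / ε^d) · (1 − c ε^d)^n. -/

import Mathlib

open MeasureTheory Metric
open scoped ENNReal RealInnerProductSpace

/-- Fill distance of the sample `X` with respect to the set `Ω`. -/
noncomputable def fillDist {d n : ℕ} (Ω : Set (EuclideanSpace ℝ (Fin d)))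
    (X : Fin n → EuclideanSpace ℝ (Fin d)) : ℝ :=
  ⨆ x ∈ Ω, ⨅ i, dist x (X i)

/-- The uniform probability measure on `Ω` (normalized Lebesgue measure restricted to `Ω`). -/
noncomputable def uniformMeasure {d : ℕ} (Ω : Set (EuclideanSpace ℝ (Fin d))) :
    Measure (EuclideanSpace ℝ (Fin d)) :=
  (volume Ω)⁻¹ • volume.restrict Ω

/-- A nicely behaving distribution on `Ω`: a probability measure comparable to the uniform
measure on `Ω`. -/
def NicelyBehaving {d : ℕ} (Ω : Set (EuclideanSpace ℝ (Fin d)))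
    (μ : Measure (EuclideanSpace ℝ (Fin d))) : Prop :=
  IsProbabilityMeasure μ ∧
    ∃ c C : ℝ≥0∞, 0 < c ∧ c ≤ C ∧ C < ⊤ ∧
      c • uniformMeasure Ω ≤ μ ∧ μ ≤ C • uniformMeasure Ω

/-- Interior cone condition for `Ω ⊆ ℝ^d`. -/
def InteriorConeCondition {d : ℕ} (Ω : Set (EuclideanSpace ℝ (Fin d))) : Prop :=
  ∃ θ : ℝ, θ ∈ Set.Ioo 0 (Real.pi / 2) ∧ ∃ r : ℝ, 0 < r ∧
    ∀ x ∈ Ω, ∃ ξ : EuclideanSpace ℝ (Fin d), ‖ξ‖ = 1 ∧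
      {p | ∃ y : EuclideanSpace ℝ (Fin d), ‖y‖ = 1 ∧ Real.cos θ ≤ ⟪y, ξ⟫ ∧
        ∃ l : ℝ, l ∈ Set.Icc 0 r ∧ p = x + l • y} ⊆ Ω

/-!
The cone condition puts into every ball `ball x ε` with `x ∈ Ω` a ball of comparable radius that
lies in `Ω`, so that `ball x ε` carries mass at least `c * ε ^ d`. Disjointness of the `ε / 4`-balls
around a maximal `ε / 2`-separated subset of `Ω` then gives an `ε / 2`-net of `Ω` with at most
`(c * (ε / 4) ^ d)⁻¹` points. A sample meeting the `ε`-ball around every point of the net has fill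
distance at most `3 * ε / 2`. Hence if `2 * ε ≤ fillDist Ω X`, the sample misses one of these balls,
and it misses any given one with probability at most `(1 - c * ε ^ d) ^ n`.
-/

open scoped NNReal

/-- The interior corkscrew condition: at every scale up to some `r > 0`, each ball centred in `Ω`
contains a ball of comparable radius that lies inside `Ω`. -/
def InteriorCorkscrewCondition {E : Type*} [PseudoMetricSpace E] (Ω : Set E) : Prop :=
  ∃ δ : ℝ, 0 < δ ∧ ∃ r : ℝ, 0 < r ∧
    ∀ x ∈ Ω, ∀ ε : ℝ, 0 < ε → ε ≤ r → ∃ z, ball z (δ * ε) ⊆ Ω ∩ ball x ε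

/-- Lower Ahlfors `s`-regularity of `μ` along `Ω`: small balls of radius `ε` centred in `Ω` have
mass at least `c * ε ^ s`. Nothing is required of balls centred outside `Ω`. -/
def IsLowerAhlforsRegularOn {E : Type*} [PseudoMetricSpace E] [MeasurableSpace E]
    (μ : Measure E) (s : ℕ) (Ω : Set E) : Prop :=
  ∃ c : ℝ, 0 < c ∧ ∃ r : ℝ, 0 < r ∧
    ∀ x ∈ Ω, ∀ ε : ℝ, 0 < ε → ε ≤ r → ENNReal.ofReal (c * ε ^ s) ≤ μ (ball x ε)

theorem mul_norm_smul_add_le_inner {F : Type*} [NormedAddCommGroup F] [InnerProductSpace ℝ F]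
    {ξ w : F} {k t : ℝ} (hξ : ‖ξ‖ = 1) (hk : 0 ≤ k) (ht : 0 ≤ t)
    (hw : (1 + k) * ‖w‖ ≤ (1 - k) * t) :
    k * ‖t • ξ + w‖ ≤ ⟪t • ξ + w, ξ⟫ := by
  have norm_le : ‖t • ξ + w‖ ≤ t + ‖w‖ := by
    simpa [norm_smul, hξ, abs_of_nonneg ht] using norm_add_le (t • ξ) w
  have inner_ge : -‖w‖ ≤ ⟪w, ξ⟫ := by
    simpa [hξ] using neg_le_of_abs_le (abs_real_inner_le_norm w ξ)
  calc k * ‖t • ξ + w‖ ≤ k * (t + ‖w‖) := by gcongr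
    _ ≤ t + -‖w‖ := by linarith
    _ ≤ t + ⟪w, ξ⟫ := by gcongr
    _ = ⟪t • ξ + w, ξ⟫ := by
      simp [inner_add_left, real_inner_smul_left, hξ]

namespace InteriorConeCondition

variable {d : ℕ} {Ω : Set (EuclideanSpace ℝ (Fin d))}

theorem exists_forall_add_mem (hΩ : InteriorConeCondition Ω) :
    ∃ k ∈ Set.Ioo (0 : ℝ) 1, ∃ r : ℝ, 0 < r ∧ ∀ x ∈ Ω, ∃ ξ : EuclideanSpace ℝ (Fin d), ‖ξ‖ = 1 ∧
      ∀ v, ‖v‖ ≤ r → k * ‖v‖ ≤ ⟪v, ξ⟫ → x + v ∈ Ω := by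
  obtain ⟨θ, ⟨hθ_pos, hθ_lt⟩, r, hr, hcone⟩ := hΩ
  have cos_pos : 0 < Real.cos θ := Real.cos_pos_of_mem_Ioo ⟨by linarith, hθ_lt⟩
  have cos_lt_one : Real.cos θ < 1 := by
    simpa using Real.cos_lt_cos_of_nonneg_of_le_pi_div_two le_rfl hθ_lt.le hθ_pos
  refine ⟨Real.cos θ, ⟨cos_pos, cos_lt_one⟩, r, hr, fun x hx => ?_⟩
  obtain ⟨ξ, hξ, hsub⟩ := hcone x hx
  refine ⟨ξ, hξ, fun v hvr hvξ => ?_⟩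
  rcases eq_or_ne v 0 with rfl | hv
  · simpa using hx
  have hv_pos : 0 < ‖v‖ := norm_pos_iff.2 hv
  refine hsub ⟨‖v‖⁻¹ • v, norm_smul_inv_norm hv, ?_, ‖v‖, ⟨hv_pos.le, hvr⟩, ?_⟩
  · rwa [real_inner_smul_left, inv_mul_eq_div, le_div_iff₀ hv_pos]
  · rw [smul_inv_smul₀ hv_pos.ne']

theorem interiorCorkscrewCondition (hΩ : InteriorConeCondition Ω) :
    InteriorCorkscrewCondition Ω := by
  obtain ⟨k, ⟨hk_pos, hk_lt⟩, r, hr, hcone⟩ := hΩ.exists_forall_add_mem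
  refine ⟨(1 - k) / 4, by linarith, r, hr, fun x hx ε hε hεr => ?_⟩
  obtain ⟨ξ, hξ, hmem⟩ := hcone x hx
  refine ⟨x + (ε / 2) • ξ, fun p hp => ?_⟩
  obtain ⟨w, rfl⟩ : ∃ w, p = x + ((ε / 2) • ξ + w) := ⟨p - (x + (ε / 2) • ξ), by abel⟩
  have hw : ‖w‖ < (1 - k) / 4 * ε := by
    simpa [← add_assoc, dist_eq_norm] using hp
  have hv : ‖(ε / 2) • ξ + w‖ < ε := by
    calc ‖(ε / 2) • ξ + w‖ ≤ ‖(ε / 2) • ξ‖ + ‖w‖ := norm_add_le _ _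
      _ = ε / 2 + ‖w‖ := by rw [norm_smul, hξ, mul_one, Real.norm_of_nonneg (by positivity)]
      _ < ε / 2 + (1 - k) / 4 * ε := by gcongr
      _ ≤ ε := by nlinarith
  have hw_cone : (1 + k) * ‖w‖ ≤ (1 - k) * (ε / 2) :=
    calc (1 + k) * ‖w‖ ≤ 2 * ‖w‖ := by gcongr; linarith
      _ ≤ (1 - k) * (ε / 2) := by linarith
  exact ⟨hmem _ (hv.le.trans hεr) (mul_norm_smul_add_le_inner hξ hk_pos.le (by positivity) hw_cone),
    by simpa [dist_eq_norm] using hv⟩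

end InteriorConeCondition

theorem InteriorCorkscrewCondition.isLowerAhlforsRegularOn {E : Type*} [NormedAddCommGroup E]
    [NormedSpace ℝ E] [FiniteDimensional ℝ E] [MeasurableSpace E] [BorelSpace E] {Ω : Set E}
    (hΩ : InteriorCorkscrewCondition Ω) (ν : Measure E) [ν.IsAddHaarMeasure] {μ : Measure E}
    {a : ℝ≥0∞} (ha : a ≠ 0) (hμ : a • ν.restrict Ω ≤ μ) :
    IsLowerAhlforsRegularOn μ (Module.finrank ℝ E) Ω := by
  obtain ⟨δ, hδ, r, hr, hball⟩ := hΩ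
  have mass_pos : 0 < a * (ENNReal.ofReal (δ ^ Module.finrank ℝ E) * ν (ball 0 1)) :=
    ENNReal.mul_pos ha <| mul_ne_zero (ENNReal.ofReal_pos.2 (by positivity)).ne'
      (measure_ball_pos ν 0 one_pos).ne'
  obtain ⟨c, hc, hc_le⟩ := ENNReal.lt_iff_exists_nnreal_btwn.1 mass_pos
  refine ⟨c, by exact_mod_cast hc, r, hr, fun x hx ε hε hεr => ?_⟩
  obtain ⟨z, hz⟩ := hball x hx ε hε hεr
  calc ENNReal.ofReal (c * ε ^ Module.finrank ℝ E)
      = c * ENNReal.ofReal (ε ^ Module.finrank ℝ E) := by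
        rw [ENNReal.ofReal_mul c.coe_nonneg, ENNReal.ofReal_coe_nnreal]
    _ ≤ a * (ENNReal.ofReal (δ ^ Module.finrank ℝ E) * ν (ball 0 1)) *
          ENNReal.ofReal (ε ^ Module.finrank ℝ E) := by gcongr
    _ = a * ν (ball z (δ * ε)) := by
        rw [Measure.addHaar_ball_of_pos _ z (by positivity), mul_pow,
          ENNReal.ofReal_mul (by positivity)]
        ring
    _ = (a • ν.restrict Ω) (ball z (δ * ε)) := by
        rw [Measure.smul_apply, smul_eq_mul,
          Measure.restrict_eq_self _ (hz.trans Set.inter_subset_left)]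
    _ ≤ μ (ball z (δ * ε)) := hμ _
    _ ≤ μ (ball x ε) := measure_mono (hz.trans Set.inter_subset_right)

theorem NicelyBehaving.isLowerAhlforsRegularOn {d : ℕ} {Ω : Set (EuclideanSpace ℝ (Fin d))}
    {μ : Measure (EuclideanSpace ℝ (Fin d))} (hμ : NicelyBehaving Ω μ) (hvol : volume Ω ≠ ⊤)
    (hΩ : InteriorCorkscrewCondition Ω) : IsLowerAhlforsRegularOn μ d Ω := by
  obtain ⟨-, c, -, hc, -, -, hle, -⟩ := hμ
  have density_ne_zero : c * (volume Ω)⁻¹ ≠ 0 :=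
    mul_ne_zero hc.ne' (ENNReal.inv_ne_zero.2 hvol)
  have density_le : (c * (volume Ω)⁻¹) • volume.restrict Ω ≤ μ := by
    simpa only [uniformMeasure, smul_smul] using hle
  simpa only [finrank_euclideanSpace_fin] using
    hΩ.isLowerAhlforsRegularOn volume density_ne_zero density_le

section Packing

variable {E : Type*} [PseudoMetricSpace E] [MeasurableSpace E] [OpensMeasurableSpace E]
  (μ : Measure E) {a : ℝ≥0∞} {ρ : ℝ≥0} {Ω C : Set E}

theorem encard_mul_le_measure_univ_of_isSeparated (hC : IsSeparated ρ C)
    (ha : ∀ x ∈ C, a ≤ μ (ball x (ρ / 2))) : (C.encard : ℝ≥0∞) * a ≤ μ Set.univ := by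
  have disjoint_balls : Pairwise
      (Function.onFun Disjoint fun x : C => ball (x : E) (ρ / 2)) := fun x y hxy => by
    have separated : (ρ : ℝ≥0∞) < edist (x : E) y :=
      hC x.2 y.2 (Subtype.coe_injective.ne hxy)
    have lt_dist : (ρ : ℝ) < dist (x : E) y := by
      rw [edist_nndist] at separated
      exact_mod_cast separated
    exact ball_disjoint_ball (by linarith)
  calc (C.encard : ℝ≥0∞) * a = ∑' _ : C, a := (ENNReal.tsum_set_const C a).symm
    _ ≤ ∑' x : C, μ (ball (x : E) (ρ / 2)) := ENNReal.tsum_le_tsum fun x => ha x x.2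
    _ ≤ μ (⋃ x : C, ball (x : E) (ρ / 2)) :=
      tsum_meas_le_meas_iUnion_of_disjoint μ (fun _ => measurableSet_ball) disjoint_balls
    _ ≤ μ Set.univ := measure_mono (Set.subset_univ _)

theorem packingNumber_mul_le_measure_univ (ha : ∀ x ∈ Ω, a ≤ μ (ball x (ρ / 2))) :
    (packingNumber ρ Ω : ℝ≥0∞) * a ≤ μ Set.univ := by
  simp only [packingNumber, ENat.toENNReal_iSup, ENNReal.iSup_mul, iSup_le_iff]
  exact fun C hCΩ hC =>
    encard_mul_le_measure_univ_of_isSeparated μ hC fun x hx => ha x (hCΩ hx)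

theorem exists_isCover_encard_le [IsFiniteMeasure μ] (ha₀ : a ≠ 0)
    (ha : ∀ x ∈ Ω, a ≤ μ (ball x (ρ / 2))) :
    ∃ S ⊆ Ω, S.Finite ∧ IsCover ρ Ω S ∧ (S.encard : ℝ≥0∞) ≤ μ Set.univ / a := by
  have packing_le : (packingNumber ρ Ω : ℝ≥0∞) ≤ μ Set.univ / a :=
    (ENNReal.le_div_iff_mul_le (.inl ha₀) (.inr (measure_ne_top μ _))).2
      (packingNumber_mul_le_measure_univ μ ha)
  have covering_le : (coveringNumber ρ Ω : ℝ≥0∞) ≤ μ Set.univ / a :=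
    (ENat.toENNReal_mono (coveringNumber_le_packingNumber ρ Ω)).trans packing_le
  have covering_ne_top : coveringNumber ρ Ω ≠ ⊤ := ENat.toENNReal_ne_top.1 <|
    ne_top_of_le_ne_top (ENNReal.div_ne_top (measure_ne_top μ _) ha₀) covering_le
  exact ⟨minimalCover ρ Ω, minimalCover_subset, finite_minimalCover,
    isCover_minimalCover covering_ne_top, by rwa [encard_minimalCover covering_ne_top]⟩

end Packing

theorem measure_pi_univ_pi_compl {ι E : Type*} [Fintype ι] [MeasurableSpace E] (μ : Measure E)
    [IsProbabilityMeasure μ] {s : Set E} (hs : MeasurableSet s) :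
    Measure.pi (fun _ : ι => μ) (Set.univ.pi fun _ => sᶜ) = (1 - μ s) ^ Fintype.card ι := by
  simp [Measure.pi_pi, prob_compl_eq_one_sub hs]

section FillDist

variable {d n : ℕ} {Ω S : Set (EuclideanSpace ℝ (Fin d))} {X : Fin n → EuclideanSpace ℝ (Fin d)}
  {ρ : ℝ≥0} {ε t : ℝ}

theorem fillDist_le (hS : IsCover ρ Ω S) (hε : 0 ≤ ε) (hX : ∀ y ∈ S, ∃ i, dist y (X i) ≤ ε) :
    fillDist Ω X ≤ ρ + ε := by
  refine Real.iSup_le (fun x => Real.iSup_le (fun hx => ?_) (by positivity)) (by positivity)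
  obtain ⟨y, hy, hxy⟩ := Set.mem_iUnion₂.1 (hS.subset_iUnion_closedBall hx)
  obtain ⟨i, hi⟩ := hX y hy
  calc ⨅ j, dist x (X j) ≤ dist x (X i) := ciInf_le (Finite.bddBelow_range _) i
    _ ≤ dist x y + dist y (X i) := dist_triangle _ _ _
    _ ≤ ρ + ε := add_le_add hxy hi

theorem setOf_le_fillDist_subset (hS : IsCover ρ Ω S) (hε : 0 ≤ ε) (ht : ρ + ε < t) :
    {X : Fin n → EuclideanSpace ℝ (Fin d) | t ≤ fillDist Ω X} ⊆
      ⋃ y ∈ S, Set.univ.pi fun _ => (ball y ε)ᶜ := by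
  intro X (hX : t ≤ fillDist Ω X)
  by_contra hmiss
  simp only [Set.mem_iUnion, Set.mem_pi, Set.mem_univ, Set.mem_compl_iff, mem_ball, forall_const,
    not_exists, not_forall, not_not] at hmiss
  have hhit : ∀ y ∈ S, ∃ i, dist y (X i) ≤ ε := fun y hy =>
    (hmiss y hy).imp fun i hi => by rw [dist_comm]; exact hi.le
  linarith [fillDist_le hS hε hhit]

theorem measure_le_fillDist_le (μ : Measure (EuclideanSpace ℝ (Fin d))) [IsProbabilityMeasure μ]
    {a b : ℝ≥0∞} (ha₀ : a ≠ 0) (ha : ∀ x ∈ Ω, a ≤ μ (ball x (ρ / 2)))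
    (hb : ∀ x ∈ Ω, b ≤ μ (ball x ε)) (hε : 0 ≤ ε) (ht : ρ + ε < t) :
    (Measure.pi fun _ : Fin n => μ) {X | t ≤ fillDist Ω X} ≤ a⁻¹ * (1 - b) ^ n := by
  obtain ⟨S, hSΩ, hS_fin, hS, hS_card⟩ := exists_isCover_encard_le μ ha₀ ha
  have miss_le (y : S) : (Measure.pi fun _ : Fin n => μ) (Set.univ.pi fun _ => (ball y.1 ε)ᶜ) ≤
      (1 - b) ^ n := by
    rw [measure_pi_univ_pi_compl μ measurableSet_ball, Fintype.card_fin]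
    gcongr
    exact hb y (hSΩ y.2)
  calc (Measure.pi fun _ : Fin n => μ) {X | t ≤ fillDist Ω X}
      ≤ (Measure.pi fun _ : Fin n => μ) (⋃ y ∈ S, Set.univ.pi fun _ => (ball y ε)ᶜ) :=
        measure_mono (setOf_le_fillDist_subset hS hε ht)
    _ ≤ ∑' y : S, (Measure.pi fun _ : Fin n => μ) (Set.univ.pi fun _ => (ball y.1 ε)ᶜ) :=
        measure_biUnion_le _ hS_fin.countable _
    _ ≤ ∑' _ : S, (1 - b) ^ n := ENNReal.tsum_le_tsum miss_le
    _ = S.encard * (1 - b) ^ n := ENNReal.tsum_set_const S _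
    _ ≤ a⁻¹ * (1 - b) ^ n := by
        gcongr
        simpa using hS_card

end FillDist

theorem fillDist_tail_bound_general {d s : ℕ} (Ω : Set (EuclideanSpace ℝ (Fin d)))
    (μ : Measure (EuclideanSpace ℝ (Fin d))) [IsProbabilityMeasure μ]
    (hμ : IsLowerAhlforsRegularOn μ s Ω) :
    ∃ κ : ℝ, 0 < κ ∧ ∃ c : ℝ, 0 < c ∧ ∃ ε₀ : ℝ, 0 < ε₀ ∧
      ∀ ε : ℝ, 0 < ε → ε ≤ ε₀ → ∀ n : ℕ,
        (Measure.pi fun _ : Fin n => μ) {X | 2 * ε ≤ fillDist Ω X}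
          ≤ ENNReal.ofReal ((κ / ε ^ s) * (1 - c * ε ^ s) ^ n) := by
  obtain ⟨c, hc, r, hr, hball⟩ := hμ
  refine ⟨4 ^ s / c, by positivity, c, hc, r, hr, fun ε hε hεr n => ?_⟩
  rcases Ω.eq_empty_or_nonempty with rfl | ⟨x, hx⟩
  · have : ¬ 2 * ε ≤ 0 := by linarith
    simp [fillDist, this]
  have mass_le_one : c * ε ^ s ≤ 1 :=
    ENNReal.ofReal_le_one.1 ((hball x hx ε hε hεr).trans prob_le_one)
  lift ε to ℝ≥0 using hε.le
  calc (Measure.pi fun _ : Fin n => μ) {X | 2 * (ε : ℝ) ≤ fillDist Ω X}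
      ≤ (ENNReal.ofReal (c * (ε / 4) ^ s))⁻¹ * (1 - ENNReal.ofReal (c * ε ^ s)) ^ n := by
        refine measure_le_fillDist_le (ρ := ε / 2) μ (ENNReal.ofReal_pos.2 (by positivity)).ne'
          (fun x hx => ?_) (fun x hx => hball x hx ε hε hεr) ε.coe_nonneg ?_
        · convert hball x hx (ε / 4) (by positivity) (by linarith) using 3
          push_cast
          ring
        · push_cast
          linarith
    _ = ENNReal.ofReal (4 ^ s / c / ε ^ s * (1 - c * ε ^ s) ^ n) := by
        rw [← ENNReal.ofReal_inv_of_pos (by positivity), ← ENNReal.ofReal_one,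
          ← ENNReal.ofReal_sub _ (by positivity), ← ENNReal.ofReal_pow (by linarith),
          ← ENNReal.ofReal_mul (by positivity), div_pow]
        field_simp

/-- quantitative tail bound for the fill distance. There are constants
`κ, c > 0` such that for all sufficiently small `ε > 0` and all `n ≥ 1`,
`P(h_n ≥ 2ε) ≤ (κ/ε^d)(1 − c ε^d)^n`. -/
theorem fillDist_tail_bound {d : ℕ} (hd : 0 < d)
    (Ω : Set (EuclideanSpace ℝ (Fin d))) (hΩ : IsCompact Ω)
    (hcone : InteriorConeCondition Ω)
    (μ : Measure (EuclideanSpace ℝ (Fin d))) [IsProbabilityMeasure μ]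
    (hμ : NicelyBehaving Ω μ) :
    ∃ κ : ℝ, 0 < κ ∧ ∃ c : ℝ, 0 < c ∧ ∃ ε₀ : ℝ, 0 < ε₀ ∧
      ∀ ε : ℝ, 0 < ε → ε ≤ ε₀ → ∀ n : ℕ, 1 ≤ n →
        (Measure.pi fun _ : Fin n => μ) {X | 2 * ε ≤ fillDist Ω X}
          ≤ ENNReal.ofReal ((κ / ε ^ d) * (1 - c * ε ^ d) ^ n) := by
  obtain ⟨κ, hκ, c, hc, ε₀, hε₀, tail_le⟩ := fillDist_tail_bound_general Ω μ
    (hμ.isLowerAhlforsRegularOn hΩ.measure_lt_top.ne hcone.interiorCorkscrewCondition)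
  exact ⟨κ, hκ, c, hc, ε₀, hε₀, fun ε hε hεε₀ n _ => tail_le ε hε hεε₀ n⟩
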